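/- arXiv:1202.6658 — 3 statements merged into one kernel-verified Lean document; each statement's English description precedes it below -/
import Mathlib

section
/- For every real α ≥ 0, the supremum of the set { d1 ∈ ℝ : 0 ≤ d1, d1 ≤ max(1, α), d1 ≤ min(1, max(α, 1 − α)), 2·d1 ≤ max(1, α) + max(0, 1 − α) } equals d_IC(α), where d_IC(α) = 1 − α if 0 ≤ α < 1/2; d_IC(α) = α if 1/2 ≤ α < 2/3; d_IC(α) = 1 − α/2 if 2/3 ≤ α < 1; d_IC(α) = α/2 if 1 ≤ α < 2; and d_IC(α) = 1 if α ≥ 2. (This is the maximum per-user generalized degrees of freedom of the symmetric Gaussian interference channel without a common message, i.e., with d0 = 0.) -/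
/-!
Apart from `0 ≤ d1`, every constraint on `d1` is an upper bound, so the feasible set is the interval
from `0` to the least of these bounds. After clearing redundancies, this least bound is
`min 1 (min (max α (1 - α)) (max (1 - α/2) (α/2)))`, whose linear pieces, as the active bound
changes at `1/2`, `2/3`, `1` and `2`, form the W-shaped curve `dIC`.
-/

noncomputable section

/-- The per-user GDoF of the symmetric Gaussian interference channel without a
common message. -/
def dIC (α : ℝ) : ℝ :=
  if α < 1/2 then 1 - α
  else if α < 2/3 then α
  else if α < 1 then 1 - α/2
  else if α < 2 then α/2
  else 1

theorem max_add_max_zero_sub {G : Type*} [AddCommGroup G] [LinearOrder G] [IsOrderedAddMonoid G]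
    (a b : G) : max a b + max 0 (a - b) = max (a + (a - b)) b := by
  rcases le_total a b with hab | hba
  · have hsub : a - b ≤ 0 := sub_nonpos.mpr hab
    rw [max_eq_right hab, max_eq_left hsub, add_zero,
      max_eq_right (add_le_of_le_of_nonpos hab hsub)]
  · have hsub : 0 ≤ a - b := sub_nonneg.mpr hba
    rw [max_eq_left hba, max_eq_right hsub, max_eq_left (le_add_of_le_of_nonneg hba hsub)]

theorem two_mul_le_max_add_max_iff {α d : ℝ} :
    2 * d ≤ max 1 α + max 0 (1 - α) ↔ d ≤ max (1 - α/2) (α/2) := by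
  rw [max_add_max_zero_sub, le_max_iff, le_max_iff]
  refine or_congr ?_ ?_ <;> constructor <;> intro h <;> linarith

theorem dIC_nonneg (α : ℝ) : 0 ≤ dIC α := by
  unfold dIC
  split_ifs <;> linarith

theorem dIC_eq_min {α : ℝ} (hα : 0 ≤ α) :
    dIC α = min 1 (min (max α (1 - α)) (max (1 - α/2) (α/2))) := by
  unfold dIC
  split_ifs with h_half h_two_thirds h_one h_two
  · rw [max_eq_right (a := α), max_eq_left, min_eq_left (a := 1 - α), min_eq_right] <;> linarith
  · rw [max_eq_left (a := α), max_eq_left, min_eq_left (a := α), min_eq_right] <;> linarith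
  · rw [max_eq_left (a := α), max_eq_left, min_eq_right (a := α), min_eq_right] <;> linarith
  · rw [max_eq_left (a := α), max_eq_right, min_eq_right (a := α), min_eq_right] <;> linarith
  · rw [max_eq_left (a := α), max_eq_right, min_eq_right (a := α), min_eq_left] <;> linarith

theorem le_dIC_iff {α d : ℝ} (hα : 0 ≤ α) :
    d ≤ dIC α ↔ d ≤ max 1 α ∧ d ≤ min 1 (max α (1 - α)) ∧
      2 * d ≤ max 1 α + max 0 (1 - α) := by
  have h_max_of_min : d ≤ min 1 (max α (1 - α)) → d ≤ max 1 α := fun h ↦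
    h.trans ((min_le_left _ _).trans (le_max_left _ _))
  rw [dIC_eq_min hα, ← min_assoc, le_min_iff, two_mul_le_max_add_max_iff]
  exact ⟨fun ⟨h_min, h_sum⟩ ↦ ⟨h_max_of_min h_min, h_min, h_sum⟩, And.right⟩

/-- The maximum per-user GDoF without a common message over the symmetric
Gaussian IC-CI equals d_IC(α). -/
theorem dIC_eq_sSup (α : ℝ) (hα : 0 ≤ α) :
    sSup { d1 : ℝ | 0 ≤ d1 ∧ d1 ≤ max 1 α ∧ d1 ≤ min 1 (max α (1 - α)) ∧
        2 * d1 ≤ max 1 α + max 0 (1 - α) } = dIC α := by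
  simp only [← le_dIC_iff hα]
  exact csSup_Icc (dIC_nonneg α)

end
end

section
/- For every real α ≥ 0, the supremum of the set { (d0 + 2·d1)/2 : d0 ≥ 0, d1 ≥ 0, d0 + d1 ≤ max(1, α), d1 ≤ min(1, max(α, 1 − α)), d0 + 2·d1 ≤ max(1, α) + max(0, 1 − α) } equals d_ICCI(α), where d_ICCI(α) = 1 − α/2 if 0 ≤ α < 1, and d_ICCI(α) = α/2 if α ≥ 1. Equivalently, d_ICCI(α) = d_IC(α) + α/2 on [0, 1/2), d_IC(α) + (2 − 3α)/2 on [1/2, 2/3), d_IC(α) on [2/3, 2), and d_IC(α) + (α − 2)/2 on [2, ∞), where d_IC(α) = 1 − α on [0, 1/2), α on [1/2, 2/3), 1 − α/2 on [2/3, 1), α/2 on [1, 2), and 1 on [2, ∞). (This is the maximum per-user generalized degrees of freedom of the symmetric Gaussian interference channel with a common message.) -/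
/-!
The constraint `d₀ + 2 d₁ ≤ max 1 α + max 0 (1 - α)` alone determines the supremum. Since
`α + max 0 (1 - α) = max 1 α`, the corner point `(α, max 0 (1 - α))` meets both this constraint and
`d₀ + d₁ ≤ max 1 α` with equality, and it is feasible for every `α ≥ 0`.
-/

noncomputable section

/-- The per-user GDoF of the symmetric Gaussian interference channel with a
common message. -/
def dICCI (α : ℝ) : ℝ :=
  if α < 1/2 then dIC α + α/2
  else if α < 2/3 then dIC α + (2 - 3*α)/2
  else if α < 1 then dIC α
  else if α < 2 then dIC α
  else dIC α + (α - 2)/2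

/-- The region `D_sym(α)` of achievable pairs `(d₀, d₁)` of the common and the private degrees of
freedom in the symmetric channel, both private messages having the same degrees of freedom. -/
def symGDoFRegion (α : ℝ) : Set (ℝ × ℝ) :=
  { d | 0 ≤ d.1 ∧ 0 ≤ d.2 ∧ d.1 + d.2 ≤ max 1 α ∧ d.2 ≤ min 1 (max α (1 - α)) ∧
    d.1 + 2 * d.2 ≤ max 1 α + max 0 (1 - α) }

/-- The per-user degrees of freedom `(d₀ + d₁ + d₂) / 2` of a pair `(d₀, d₁)`, where `d₂ = d₁`. -/
def perUserGDoF (d : ℝ × ℝ) : ℝ :=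
  (d.1 + 2 * d.2) / 2

/-- The corner of the region at which the common message takes the cross-link level `α` and the
private messages take what the direct links have beyond it. -/
def cornerPoint (α : ℝ) : ℝ × ℝ :=
  (α, max 0 (1 - α))

theorem dICCI_eq_ite (α : ℝ) : dICCI α = if α < 1 then 1 - α / 2 else α / 2 := by
  unfold dICCI dIC
  split_ifs <;> linarith

theorem dICCI_eq_max_add_max_div_two (α : ℝ) :
    dICCI α = (max 1 α + max 0 (1 - α)) / 2 := by
  rw [dICCI_eq_ite]
  split_ifs with h
  · rw [max_eq_left h.le, max_eq_right (sub_nonneg.2 h.le)]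
    ring
  · rw [max_eq_right (not_lt.1 h), max_eq_left (sub_nonpos.2 (not_lt.1 h)), add_zero]

theorem perUserGDoF_le_dICCI {α : ℝ} {d : ℝ × ℝ} (hd : d ∈ symGDoFRegion α) :
    perUserGDoF d ≤ dICCI α := by
  obtain ⟨-, -, -, -, hsum⟩ := hd
  rw [dICCI_eq_max_add_max_div_two]
  exact div_le_div_of_nonneg_right hsum zero_le_two

theorem cornerPoint_fst_add_snd (α : ℝ) :
    (cornerPoint α).1 + (cornerPoint α).2 = max 1 α := by
  rw [cornerPoint, max_comm 0, ← posPart_def, ← sup_eq_add_posPart_sub]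

theorem cornerPoint_fst_add_two_mul_snd (α : ℝ) :
    (cornerPoint α).1 + 2 * (cornerPoint α).2 = max 1 α + max 0 (1 - α) := by
  rw [two_mul, ← add_assoc, cornerPoint_fst_add_snd, cornerPoint]

theorem cornerPoint_mem_symGDoFRegion {α : ℝ} (hα : 0 ≤ α) :
    cornerPoint α ∈ symGDoFRegion α := by
  have hprivate : max 0 (1 - α) ≤ min 1 (max α (1 - α)) :=
    le_min (max_le zero_le_one (sub_le_self 1 hα)) (max_le_max_right (1 - α) hα)
  exact ⟨hα, le_max_left _ _, (cornerPoint_fst_add_snd α).le, hprivate,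
    (cornerPoint_fst_add_two_mul_snd α).le⟩

theorem perUserGDoF_cornerPoint (α : ℝ) : perUserGDoF (cornerPoint α) = dICCI α := by
  rw [perUserGDoF, cornerPoint_fst_add_two_mul_snd, dICCI_eq_max_add_max_div_two]

theorem isGreatest_perUserGDoF_image_symGDoFRegion {α : ℝ} (hα : 0 ≤ α) :
    IsGreatest (perUserGDoF '' symGDoFRegion α) (dICCI α) :=
  ⟨⟨cornerPoint α, cornerPoint_mem_symGDoFRegion hα, perUserGDoF_cornerPoint α⟩,
    Set.forall_mem_image.2 fun _ => perUserGDoF_le_dICCI⟩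

theorem perUserGDoF_image_symGDoFRegion (α : ℝ) :
    perUserGDoF '' symGDoFRegion α =
      { x : ℝ | ∃ d0 d1 : ℝ, 0 ≤ d0 ∧ 0 ≤ d1 ∧ d0 + d1 ≤ max 1 α ∧
        d1 ≤ min 1 (max α (1 - α)) ∧ d0 + 2 * d1 ≤ max 1 α + max 0 (1 - α) ∧
        x = (d0 + 2 * d1) / 2 } := by
  ext x
  simp only [Set.mem_image, Prod.exists, symGDoFRegion, perUserGDoF, Set.mem_ofPred_eq, and_assoc,
    eq_comm]

/-- The maximum per-user GDoF with the common message over the symmetric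
Gaussian IC-CI equals d_ICCI(α), which is 1 − α/2 for α < 1 and α/2 for α ≥ 1. -/
theorem dICCI_eq_sSup (α : ℝ) (hα : 0 ≤ α) :
    sSup { x : ℝ | ∃ d0 d1 : ℝ, 0 ≤ d0 ∧ 0 ≤ d1 ∧ d0 + d1 ≤ max 1 α ∧
        d1 ≤ min 1 (max α (1 - α)) ∧ d0 + 2 * d1 ≤ max 1 α + max 0 (1 - α) ∧
        x = (d0 + 2 * d1) / 2 } = dICCI α ∧
    dICCI α = (if α < 1 then 1 - α/2 else α/2) := by
  rw [← perUserGDoF_image_symGDoFRegion]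
  exact ⟨(isGreatest_perUserGDoF_image_symGDoFRegion hα).csSup_eq, dICCI_eq_ite α⟩

end
end

section
/- For all real numbers a ≥ 0 and b ≥ 0, the function p ↦ log₂(1 + a·p/(1 + b·p)) is concave on the interval [0, ∞). -/
/-!
A quotient of affine functions `(a * x + b) / (c * x + d)` is concave wherever its denominator is
positive, provided `c` and the determinant `a * d - b * c` do not have opposite signs: its Jensen
gap is then an explicit nonnegative fraction. For the signal-to-interference ratio
`a * p / (1 + b * p)` the slope of the denominator is `b` and the determinant is `a`. Adding `1`
and composing with `logb 2`, monotone and concave on the positive reals, preserves concavity.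
-/

open Set

theorem concaveOn_comp_of_mapsTo {𝕜 E α β : Type*} [Semiring 𝕜] [PartialOrder 𝕜]
    [AddCommMonoid E] [AddCommMonoid α] [PartialOrder α] [AddCommMonoid β] [PartialOrder β]
    [SMul 𝕜 E] [SMul 𝕜 α] [SMul 𝕜 β] {s : Set E} {t : Set β} {f : E → β} {g : β → α}
    (hg : ConcaveOn 𝕜 t g) (hg_mono : MonotoneOn g t) (hf : ConcaveOn 𝕜 s f)
    (hst : MapsTo f s t) : ConcaveOn 𝕜 s (g ∘ f) := by
  refine ⟨hf.1, fun x hx y hy u v hu hv huv => ?_⟩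
  calc u • g (f x) + v • g (f y)
      ≤ g (u • f x + v • f y) := hg.2 (hst hx) (hst hy) hu hv huv
    _ ≤ g (f (u • x + v • y)) :=
        hg_mono (hg.1 (hst hx) (hst hy) hu hv huv) (hst (hf.1 hx hy hu hv huv))
          (hf.2 hx hy hu hv huv)

theorem concaveOn_logb {b : ℝ} (hb : 1 < b) : ConcaveOn ℝ (Ioi 0) (Real.logb b) := by
  have hlog : ConcaveOn ℝ (Ioi 0) fun x => (Real.log b)⁻¹ • Real.log x :=
    strictConcaveOn_log_Ioi.concaveOn.smul (inv_nonneg.2 (Real.log_pos hb).le)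
  exact hlog.congr fun x _ => by
    simp only [smul_eq_mul, inv_mul_eq_div, Real.log_div_log]

section AffineDivAffine

variable {𝕜 : Type*} [Field 𝕜] {a b c d : 𝕜}

theorem affine_div_affine_jensen_gap {x y u v : 𝕜} (huv : u + v = 1) (hx : c * x + d ≠ 0)
    (hy : c * y + d ≠ 0) (hxy : c * (u * x + v * y) + d ≠ 0) :
    (a * (u * x + v * y) + b) / (c * (u * x + v * y) + d) -
        (u * ((a * x + b) / (c * x + d)) + v * ((a * y + b) / (c * y + d))) =
      u * v * (c * (a * d - b * c)) * (x - y) ^ 2 /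
        ((c * (u * x + v * y) + d) * ((c * x + d) * (c * y + d))) := by
  rw [← mul_div_assoc, ← mul_div_assoc, div_add_div _ _ hx hy,
    div_sub_div _ _ hxy (mul_ne_zero hx hy)]
  congr 1
  obtain rfl : u = 1 - v := eq_sub_of_add_eq huv
  ring

variable [LinearOrder 𝕜] [IsStrictOrderedRing 𝕜]

theorem convex_setOf_affine_pos (c d : 𝕜) : Convex 𝕜 {x : 𝕜 | 0 < c * x + d} := by
  simpa only [neg_lt_iff_pos_add, smul_eq_mul] using
    convex_halfSpace_gt (IsLinearMap.isLinearMap_smul c) (-d)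

theorem concaveOn_affine_div_affine (h : 0 ≤ c * (a * d - b * c)) :
    ConcaveOn 𝕜 {x | 0 < c * x + d} fun x => (a * x + b) / (c * x + d) := by
  refine ⟨convex_setOf_affine_pos c d, fun x hx y hy u v hu hv huv => ?_⟩
  have hxy : 0 < c * (u * x + v * y) + d := convex_setOf_affine_pos c d hx hy hu hv huv
  rw [mem_ofPred_eq] at hx hy
  simp only [smul_eq_mul]
  rw [← sub_nonneg, affine_div_affine_jensen_gap huv hx.ne' hy.ne' hxy.ne']
  positivity

end AffineDivAffine

/-- The function p ↦ log₂(1 + a·p/(1 + b·p)) is concave on [0, ∞), for a, b ≥ 0. -/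
theorem concaveOn_logb_rate (a b : ℝ) (ha : 0 ≤ a) (hb : 0 ≤ b) :
    ConcaveOn ℝ (Set.Ici (0 : ℝ))
      (fun p : ℝ => Real.logb 2 (1 + a * p / (1 + b * p))) := by
  have hden_pos : Ici 0 ⊆ {p : ℝ | 0 < b * p + 1} := fun p (hp : 0 ≤ p) => by
    rw [mem_ofPred_eq]
    positivity
  have hdet : 0 ≤ b * (a * 1 - 0 * b) := by
    simpa using mul_nonneg hb ha
  have hratio : ConcaveOn ℝ (Ici 0) fun p => 1 + a * p / (1 + b * p) :=
    (((concaveOn_affine_div_affine hdet).subset hden_pos (convex_Ici 0)).add_const 1).congr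
      fun p _ => by simp only [Pi.add_apply, add_zero, add_comm]
  have hratio_pos : MapsTo (fun p => 1 + a * p / (1 + b * p)) (Ici 0) (Ioi 0) :=
    fun p (hp : 0 ≤ p) => by
      rw [mem_Ioi]
      positivity
  exact concaveOn_comp_of_mapsTo (concaveOn_logb one_lt_two)
    (Real.strictMonoOn_logb one_lt_two).monotoneOn hratio hratio_pos
end
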